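/- Consider the two-period time-dependent quantum walk on ℤ whose coin sequence is U_{2s} = H₀ and U_{2s+1} = H₁ (s = 0,1,2,...), where H₀ = [[a₀,b₀],[c₀,d₀]] and H₁ = [[a₁,b₁],[c₁,d₁]] are real orthogonal 2×2 matrices all of whose entries are nonzero. If det(H₁H₀) < 0, then X_t/t converges weakly as t → ∞ to a random variable Z whose law is absolutely continuous with density f(x) = f_K(x; a₀a₁) · [1 − (|α|² − |β|² + ((α·conj(β) + conj(α)·β)·b₀)/a₀)·x]. -/

import Mathlib

open MeasureTheory Complex Filter

noncomputable section

/-- The Konno density function `f_K(x; a)`; only `|a|` matters. -/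
def konnoDensity (a x : ℝ) : ℝ :=
  if |x| < |a| then
    Real.sqrt (1 - |a| ^ 2) / (Real.pi * (1 - x ^ 2) * Real.sqrt (|a| ^ 2 - x ^ 2))
  else 0

/-- Time evolution of a time-dependent discrete-time quantum walk on `ℤ`:
`ψ_{t+1}(x) = P_t ψ_t(x+1) + Q_t ψ_t(x-1)`, where `P_t`/`Q_t` are the top/bottom
row parts of the coin `U t`. -/
def QWEvolves (U : ℕ → Matrix (Fin 2) (Fin 2) ℂ) (ψ : ℕ → ℤ → Fin 2 → ℂ) : Prop :=
  ∀ t : ℕ, ∀ x : ℤ,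
    ψ (t + 1) x 0 = U t 0 0 * ψ t (x + 1) 0 + U t 0 1 * ψ t (x + 1) 1 ∧
    ψ (t + 1) x 1 = U t 1 0 * ψ t (x - 1) 0 + U t 1 1 * ψ t (x - 1) 1

/-- Initial state `ψ₀(0) = ᵀ(α, β)`, `ψ₀(x) = 0` for `x ≠ 0`. -/
def QWInit (α β : ℂ) (ψ : ℕ → ℤ → Fin 2 → ℂ) : Prop :=
  ψ 0 0 0 = α ∧ ψ 0 0 1 = β ∧ ∀ x : ℤ, x ≠ 0 → (ψ 0 x 0 = 0 ∧ ψ 0 x 1 = 0)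

/-- `P(X_t = x) = ‖ψ_t(x)‖²`. -/
def qwProb (ψ : ℕ → ℤ → Fin 2 → ℂ) (t : ℕ) (x : ℤ) : ℝ :=
  Complex.normSq (ψ t x 0) + Complex.normSq (ψ t x 1)

/-- The law of `X_t / t`: `μ_t = Σ_{x ∈ ℤ} P(X_t = x) δ_{x/t}`. -/
def qwMeasure (ψ : ℕ → ℤ → Fin 2 → ℂ) (t : ℕ) : Measure ℝ :=
  Measure.sum fun x : ℤ => ENNReal.ofReal (qwProb ψ t x) • Measure.dirac ((x : ℝ) / (t : ℝ))

/-- Weak convergence of `X_t / t` to the law with density `f`. -/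
def qwWeakLimit (ψ : ℕ → ℤ → Fin 2 → ℂ) (f : ℝ → ℝ) : Prop :=
  ∀ g : BoundedContinuousFunction ℝ ℝ,
    Tendsto (fun t : ℕ => ∫ y, g y ∂ qwMeasure ψ t) atTop (nhds (∫ y, g y * f y))

/-- `R(k) = diag(e^{ik}, e^{-ik})`. -/
def Rmat (k : ℝ) : Matrix (Fin 2) (Fin 2) ℂ :=
  !![Complex.exp (Complex.I * k), 0; 0, Complex.exp (-(Complex.I * k))]

/-- The group velocity of the walk with parameter `a` at quasi-momentum `φ`. -/
def konnoVelocity (a φ : ℝ) : ℝ :=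
  -(a * Real.cos φ) / Real.sqrt (1 - (a * Real.sin φ) ^ 2)

lemma one_sub_mul_sin_sq_pos {a : ℝ} (ha : a ^ 2 < 1) (φ : ℝ) :
    0 < 1 - (a * Real.sin φ) ^ 2 := by
  nlinarith [Real.sin_sq_le_one φ, sq_nonneg a, sq_nonneg (Real.sin φ),
    mul_le_mul_of_nonneg_left (Real.sin_sq_le_one φ) (sq_nonneg a)]

lemma one_sub_konnoVelocity_sq {a : ℝ} (ha : a ^ 2 < 1) (φ : ℝ) :
    1 - konnoVelocity a φ ^ 2 = (1 - a ^ 2) / (1 - (a * Real.sin φ) ^ 2) := by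
  have h := one_sub_mul_sin_sq_pos ha φ
  rw [konnoVelocity, div_pow, Real.sq_sqrt h.le]
  rw [eq_div_iff h.ne', sub_mul, neg_sq, div_mul_cancel₀ _ h.ne']
  linear_combination -a ^ 2 * Real.sin_sq_add_cos_sq φ

lemma sq_sub_konnoVelocity_sq {a : ℝ} (ha : a ^ 2 < 1) (φ : ℝ) :
    a ^ 2 - konnoVelocity a φ ^ 2 =
      (a * Real.sin φ) ^ 2 * (1 - a ^ 2) / (1 - (a * Real.sin φ) ^ 2) := by
  have h := one_sub_mul_sin_sq_pos ha φ
  rw [konnoVelocity, div_pow, Real.sq_sqrt h.le]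
  rw [eq_div_iff h.ne', sub_mul, neg_sq, div_mul_cancel₀ _ h.ne']
  linear_combination -a ^ 2 * Real.sin_sq_add_cos_sq φ

lemma hasDerivAt_konnoVelocity {a : ℝ} (ha : a ^ 2 < 1) (φ : ℝ) :
    HasDerivAt (konnoVelocity a)
      (a * Real.sin φ * (1 - a ^ 2) / Real.sqrt (1 - (a * Real.sin φ) ^ 2) ^ 3) φ := by
  have h := one_sub_mul_sin_sq_pos ha φ
  have hC := Real.sqrt_pos.2 h
  have h1 : HasDerivAt (fun φ => 1 - (a * Real.sin φ) ^ 2)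
      (-(2 * (a * Real.sin φ) * (a * Real.cos φ))) φ := by
    have := (((Real.hasDerivAt_sin φ).const_mul a).pow 2).const_sub 1
    simpa using this
  have h2 := (((Real.hasDerivAt_cos φ).const_mul a).neg).div (h1.sqrt h.ne') hC.ne'
  refine h2.congr_deriv ?_
  have hs := Real.sq_sqrt h.le
  have hc : Real.cos φ ^ 2 = 1 - Real.sin φ ^ 2 := by
    linarith [Real.sin_sq_add_cos_sq φ]
  generalize Real.sqrt (1 - (a * Real.sin φ) ^ 2) = C at *
  have : C ≠ 0 := hC.ne'
  simp only [Pi.neg_apply]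
  field_simp
  rw [hs, hc]
  ring

lemma cos_eq_of_konnoVelocity {a : ℝ} (ha : a ^ 2 < 1) (h0 : a ≠ 0) (φ : ℝ) :
    Real.cos φ = -(konnoVelocity a φ * Real.sqrt (1 - a ^ 2)) /
      (a * Real.sqrt (1 - konnoVelocity a φ ^ 2)) := by
  have h := one_sub_mul_sin_sq_pos ha φ
  have hC := Real.sqrt_pos.2 h
  have hD : 0 < Real.sqrt (1 - a ^ 2) := Real.sqrt_pos.2 (by linarith)
  rw [one_sub_konnoVelocity_sq ha, Real.sqrt_div (by linarith), konnoVelocity]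
  generalize Real.sqrt (1 - (a * Real.sin φ) ^ 2) = C at *
  field_simp

lemma konnoVelocity_image {a : ℝ} (ha : a ^ 2 < 1) (h0 : a ≠ 0) :
    konnoVelocity a '' Set.Ioo 0 Real.pi = {x | |x| < |a|} := by
  ext x
  simp only [Set.mem_image, Set.mem_ofPred_eq, ← sq_lt_sq]
  constructor
  · rintro ⟨φ, hφ, rfl⟩
    have hs := Real.sin_pos_of_mem_Ioo hφ
    have h := one_sub_mul_sin_sq_pos ha φ
    have h1 : 0 < 1 - a ^ 2 := by linarith
    have : 0 < a ^ 2 - konnoVelocity a φ ^ 2 := by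
      rw [sq_sub_konnoVelocity_sq ha]
      positivity
    linarith
  · intro hx
    have h1 : 0 < 1 - a ^ 2 := by linarith
    have h2 : 0 < 1 - x ^ 2 := by linarith
    set u := -(x * Real.sqrt (1 - a ^ 2)) / (a * Real.sqrt (1 - x ^ 2)) with hu
    have hu2 : u ^ 2 = x ^ 2 * (1 - a ^ 2) / (a ^ 2 * (1 - x ^ 2)) := by
      rw [hu, div_pow, neg_sq, mul_pow, mul_pow, Real.sq_sqrt h1.le, Real.sq_sqrt h2.le]
    have hu1 : u ^ 2 < 1 := by
      rw [hu2, div_lt_one (by positivity)]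
      nlinarith
    have hu1' := abs_lt.1 ((sq_lt_one_iff_abs_lt_one u).1 hu1)
    refine ⟨Real.arccos u, ⟨Real.arccos_pos.2 hu1'.2, ?_⟩, ?_⟩
    · refine lt_of_le_of_ne (Real.arccos_le_pi u) fun h => ?_
      rw [Real.arccos_eq_pi] at h
      linarith
    · have hC : 1 - (a * Real.sin (Real.arccos u)) ^ 2 = (1 - a ^ 2) / (1 - x ^ 2) := by
        rw [Real.sin_arccos, mul_pow, Real.sq_sqrt (by linarith), hu2]
        field_simp
        ring
      rw [konnoVelocity, hC, Real.cos_arccos hu1'.1.le hu1'.2.le, Real.sqrt_div h1.le, hu]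
      have := Real.sqrt_pos.2 h1
      have := Real.sqrt_pos.2 h2
      field_simp

lemma abs_deriv_mul_konnoDensity {a : ℝ} (ha : a ^ 2 < 1) (h0 : a ≠ 0) {φ : ℝ}
    (hφ : φ ∈ Set.Ioo 0 Real.pi) :
    |a * Real.sin φ * (1 - a ^ 2) / Real.sqrt (1 - (a * Real.sin φ) ^ 2) ^ 3| *
      konnoDensity a (konnoVelocity a φ) = Real.pi⁻¹ := by
  have hs := Real.sin_pos_of_mem_Ioo hφ
  have h := one_sub_mul_sin_sq_pos ha φ
  have hC := Real.sqrt_pos.2 h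
  have h1 : 0 < 1 - a ^ 2 := by linarith
  have hD := Real.sqrt_pos.2 h1
  have ha' := abs_pos.2 h0
  have hx : |konnoVelocity a φ| < |a| := by
    have := konnoVelocity_image ha h0
    exact this.subset (Set.mem_image_of_mem _ hφ)
  rw [konnoDensity, if_pos hx, sq_abs, one_sub_konnoVelocity_sq ha, sq_sub_konnoVelocity_sq ha,
    Real.sqrt_div (by positivity), Real.sqrt_mul (by positivity), Real.sqrt_sq_eq_abs,
    abs_div, abs_mul, abs_mul, abs_of_pos hs, abs_of_pos h1, abs_of_pos (pow_pos hC 3)]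
  nth_rewrite 2 [← Real.sq_sqrt h.le]
  generalize Real.sqrt (1 - (a * Real.sin φ) ^ 2) = C at *
  have := Real.pi_pos
  field_simp

/-- The Konno density is the law of the group velocity at a uniform quasi-momentum. -/
lemma integral_konnoDensity_mul {a : ℝ} (ha : a ^ 2 < 1) (h0 : a ≠ 0) (G : ℝ → ℂ) :
    ∫ x, (konnoDensity a x : ℂ) * G x =
      (Real.pi : ℂ)⁻¹ * ∫ φ in (0 : ℝ)..Real.pi, G (konnoVelocity a φ) := by
  have hinj : Set.InjOn (konnoVelocity a) (Set.Ioo 0 Real.pi) := by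
    intro φ hφ φ' hφ' h
    refine Real.injOn_cos ⟨hφ.1.le, hφ.2.le⟩ ⟨hφ'.1.le, hφ'.2.le⟩ ?_
    rw [cos_eq_of_konnoVelocity ha h0 φ, cos_eq_of_konnoVelocity ha h0 φ', h]
  have key := integral_image_eq_integral_abs_deriv_smul measurableSet_Ioo
    (fun φ _ => (hasDerivAt_konnoVelocity ha φ).hasDerivWithinAt) hinj
    (fun x => (konnoDensity a x : ℂ) * G x)
  rw [konnoVelocity_image ha h0, setIntegral_eq_integral_of_forall_compl_eq_zero] at key
  · rw [key, intervalIntegral.integral_of_le Real.pi_pos.le, integral_Ioc_eq_integral_Ioo,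
      ← integral_const_mul]
    refine setIntegral_congr_fun measurableSet_Ioo fun φ hφ => ?_
    have := abs_deriv_mul_konnoDensity ha h0 hφ
    simp only [Complex.real_smul]
    rw [← mul_assoc, ← Complex.ofReal_mul, this, Complex.ofReal_inv]
  · intro x hx
    rw [Set.mem_ofPred_eq] at hx
    simp [konnoDensity, hx]

/-- The spatial Fourier transform of the amplitude of a walk. -/
def qwFourier (ψ : ℕ → ℤ → Fin 2 → ℂ) (t : ℕ) (k : ℝ) : Fin 2 → ℂ :=
  fun j => ∑' x : ℤ, Complex.exp (-(Complex.I * k * x)) * ψ t x j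

section Fourier

variable {U : ℕ → Matrix (Fin 2) (Fin 2) ℂ} {ψ : ℕ → ℤ → Fin 2 → ℂ} {α β : ℂ}

lemma QWEvolves.eq_zero_of_lt_abs (hinit : QWInit α β ψ) (hevol : QWEvolves U ψ) (t : ℕ) :
    ∀ x : ℤ, (t : ℤ) < |x| → ∀ j, ψ t x j = 0 := by
  induction t with
  | zero =>
    intro x hx j
    have hx0 : x ≠ 0 := by
      rintro rfl
      simp at hx
    have := hinit.2.2 x hx0
    fin_cases j
    · exact this.1
    · exact this.2
  | succ t ih =>
    intro x hx j
    push_cast at hx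
    have h1 : (t : ℤ) < |x + 1| := by grind
    have h2 : (t : ℤ) < |x - 1| := by grind
    have := hevol t x
    fin_cases j
    · simp [this.1, ih _ h1]
    · simp [this.2, ih _ h2]

lemma QWEvolves.eq_zero_of_notMem_Icc (hinit : QWInit α β ψ) (hevol : QWEvolves U ψ) (t : ℕ)
    {x : ℤ} (hx : x ∉ Finset.Icc (-(t : ℤ)) t) (j : Fin 2) : ψ t x j = 0 := by
  refine hevol.eq_zero_of_lt_abs hinit t x ?_ j
  rw [Finset.mem_Icc, ← abs_le] at hx
  exact not_le.1 hx

lemma QWEvolves.qwFourier_eq_sum (hinit : QWInit α β ψ) (hevol : QWEvolves U ψ) (t : ℕ) (k : ℝ)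
    (j : Fin 2) : qwFourier ψ t k j =
      ∑ x ∈ Finset.Icc (-(t : ℤ)) t, Complex.exp (-(Complex.I * k * x)) * ψ t x j :=
  tsum_eq_sum fun x hx => by simp [hevol.eq_zero_of_notMem_Icc hinit t hx j]

lemma QWEvolves.summable_exp_mul (hinit : QWInit α β ψ) (hevol : QWEvolves U ψ) (t : ℕ) (k : ℝ)
    (j : Fin 2) : Summable fun x : ℤ => Complex.exp (-(Complex.I * k * x)) * ψ t x j :=
  summable_of_ne_finset_zero (s := Finset.Icc (-(t : ℤ)) t)
    fun x hx => by simp [hevol.eq_zero_of_notMem_Icc hinit t hx j]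

lemma qwFourier_zero (hinit : QWInit α β ψ) (k : ℝ) : qwFourier ψ 0 k = ![α, β] := by
  have h : ∀ j, qwFourier ψ 0 k j = ψ 0 0 j := by
    intro j
    rw [qwFourier, tsum_eq_single 0]
    · simp
    · intro x hx
      have := hinit.2.2 x hx
      fin_cases j
      · simp [this.1]
      · simp [this.2]
  ext j
  fin_cases j
  · simpa [hinit.1] using h 0
  · simpa [hinit.2.1] using h 1

lemma QWEvolves.qwFourier_succ (hinit : QWInit α β ψ) (hevol : QWEvolves U ψ) (t : ℕ) (k : ℝ) :
    qwFourier ψ (t + 1) k = (Rmat k * U t).mulVec (qwFourier ψ t k) := by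
  have hs := hevol.summable_exp_mul hinit t k
  ext j
  fin_cases j
  · have h1 : qwFourier ψ (t + 1) k 0 = ∑' x : ℤ,
        (Complex.exp (Complex.I * k) * U t 0 0 *
          (Complex.exp (-(Complex.I * k * ((x + 1 : ℤ) : ℂ))) * ψ t (x + 1) 0) +
        Complex.exp (Complex.I * k) * U t 0 1 *
          (Complex.exp (-(Complex.I * k * ((x + 1 : ℤ) : ℂ))) * ψ t (x + 1) 1)) := by
      refine tsum_congr fun x => ?_
      rw [(hevol t x).1]
      have : Complex.exp (-(Complex.I * k * x)) = Complex.exp (Complex.I * k) *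
          Complex.exp (-(Complex.I * k * ((x + 1 : ℤ) : ℂ))) := by
        rw [← Complex.exp_add]
        congr 1
        push_cast
        ring
      rw [this]
      ring
    have h2 := (Equiv.addRight (1 : ℤ)).tsum_eq (fun x : ℤ =>
        Complex.exp (Complex.I * k) * U t 0 0 *
          (Complex.exp (-(Complex.I * k * x)) * ψ t x 0) +
        Complex.exp (Complex.I * k) * U t 0 1 *
          (Complex.exp (-(Complex.I * k * x)) * ψ t x 1))
    simp only [Equiv.coe_addRight] at h2
    rw [((hs 0).mul_left _).tsum_add ((hs 1).mul_left _), tsum_mul_left, tsum_mul_left] at h2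
    simp only [Fin.zero_eta]
    rw [h1, h2]
    simp [Matrix.mulVec, dotProduct, Matrix.mul_apply, Rmat, qwFourier, Fin.sum_univ_two]
  · have h1 : qwFourier ψ (t + 1) k 1 = ∑' x : ℤ,
        (Complex.exp (-(Complex.I * k)) * U t 1 0 *
          (Complex.exp (-(Complex.I * k * ((x - 1 : ℤ) : ℂ))) * ψ t (x - 1) 0) +
        Complex.exp (-(Complex.I * k)) * U t 1 1 *
          (Complex.exp (-(Complex.I * k * ((x - 1 : ℤ) : ℂ))) * ψ t (x - 1) 1)) := by
      refine tsum_congr fun x => ?_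
      rw [(hevol t x).2]
      have : Complex.exp (-(Complex.I * k * x)) = Complex.exp (-(Complex.I * k)) *
          Complex.exp (-(Complex.I * k * ((x - 1 : ℤ) : ℂ))) := by
        rw [← Complex.exp_add]
        congr 1
        push_cast
        ring
      rw [this]
      ring
    have h2 := (Equiv.subRight (1 : ℤ)).tsum_eq (fun x : ℤ =>
        Complex.exp (-(Complex.I * k)) * U t 1 0 *
          (Complex.exp (-(Complex.I * k * x)) * ψ t x 0) +
        Complex.exp (-(Complex.I * k)) * U t 1 1 *
          (Complex.exp (-(Complex.I * k * x)) * ψ t x 1))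
    simp only [Equiv.subRight_apply] at h2
    rw [((hs 0).mul_left _).tsum_add ((hs 1).mul_left _), tsum_mul_left, tsum_mul_left] at h2
    simp only [Fin.mk_one]
    rw [h1, h2]
    simp [Matrix.mulVec, dotProduct, Matrix.mul_apply, Rmat, qwFourier, Fin.sum_univ_two]

lemma integral_exp_I_mul_int (n : ℤ) :
    ∫ k in (-Real.pi)..Real.pi, Complex.exp (Complex.I * n * k) =
      if n = 0 then 2 * (Real.pi : ℂ) else 0 := by
  split_ifs with hn
  · subst hn
    simp
    ring
  · have hn' : Complex.I * (n : ℂ) ≠ 0 := by simp [hn]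
    rw [integral_exp_mul_complex hn']
    have : Complex.exp (Complex.I * n * (Real.pi : ℝ)) =
        Complex.exp (Complex.I * n * ((-Real.pi : ℝ) : ℂ)) := by
      rw [Complex.exp_eq_exp_iff_exists_int]
      refine ⟨n, ?_⟩
      push_cast
      ring
    rw [this, sub_self, zero_div]

/-- Parseval's identity for a trigonometric polynomial and its translate. -/
lemma integral_conj_mul_translate (F : Finset ℤ) (u : ℤ → ℂ) (s : ℝ) :
    ∫ k in (-Real.pi)..Real.pi,
      star (∑ x ∈ F, Complex.exp (-(Complex.I * k * x)) * u x) *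
        ∑ y ∈ F, Complex.exp (-(Complex.I * ((k - s : ℝ) : ℂ) * y)) * u y =
      2 * Real.pi * ∑ x ∈ F, Complex.exp (Complex.I * s * x) * (Complex.normSq (u x) : ℂ) := by
  have h : ∀ k : ℝ, star (∑ x ∈ F, Complex.exp (-(Complex.I * k * x)) * u x) *
        ∑ y ∈ F, Complex.exp (-(Complex.I * ((k - s : ℝ) : ℂ) * y)) * u y =
      ∑ x ∈ F, ∑ y ∈ F, star (u x) * u y * Complex.exp (Complex.I * s * y) *
        Complex.exp (Complex.I * ((x - y : ℤ) : ℂ) * k) := by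
    intro k
    rw [star_sum, Finset.sum_mul_sum]
    refine Finset.sum_congr rfl fun x _ => Finset.sum_congr rfl fun y _ => ?_
    have h1 : star (Complex.exp (-(Complex.I * k * x))) = Complex.exp (Complex.I * k * x) := by
      simp [← Complex.exp_conj]
    have h2 : Complex.exp (Complex.I * k * x) *
        Complex.exp (-(Complex.I * ((k - s : ℝ) : ℂ) * y)) = Complex.exp (Complex.I * s * y) *
        Complex.exp (Complex.I * ((x - y : ℤ) : ℂ) * k) := by
      rw [← Complex.exp_add, ← Complex.exp_add]
      congr 1
      push_cast
      ring
    rw [star_mul, h1]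
    linear_combination star (u x) * u y * h2
  have hint : ∀ x y : ℤ, IntervalIntegrable (fun k : ℝ =>
      star (u x) * u y * Complex.exp (Complex.I * s * y) *
        Complex.exp (Complex.I * ((x - y : ℤ) : ℂ) * k)) volume (-Real.pi) Real.pi := by
    intro x y
    apply Continuous.intervalIntegrable
    fun_prop
  simp_rw [h]
  rw [intervalIntegral.integral_finsetSum fun x _ => by
    apply Continuous.intervalIntegrable
    fun_prop]
  rw [Finset.mul_sum]
  refine Finset.sum_congr rfl fun x hx => ?_
  rw [intervalIntegral.integral_finsetSum fun y _ => hint x y]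
  simp_rw [intervalIntegral.integral_const_mul, integral_exp_I_mul_int, sub_eq_zero]
  rw [Finset.sum_eq_single x (fun y _ hy => by simp [hy.symm]) (fun h => absurd hx h), if_pos rfl,
    Complex.normSq_eq_conj_mul_self]
  simp only [Complex.star_def]
  ring

lemma QWEvolves.continuous_qwFourier (hinit : QWInit α β ψ) (hevol : QWEvolves U ψ) (t : ℕ) :
    Continuous (qwFourier ψ t) := by
  refine continuous_pi fun j => ?_
  simp_rw [hevol.qwFourier_eq_sum hinit t]
  fun_prop

lemma QWEvolves.charFun_qwMeasure (hinit : QWInit α β ψ) (hevol : QWEvolves U ψ) (t : ℕ) (ξ : ℝ) :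
    charFun (qwMeasure ψ t) ξ = (2 * Real.pi : ℂ)⁻¹ * ∫ k in (-Real.pi)..Real.pi,
      star (qwFourier ψ t k) ⬝ᵥ qwFourier ψ t (k - ξ / t) := by
  have hc := hevol.continuous_qwFourier hinit t
  have hint : ∀ j, IntervalIntegrable (fun k : ℝ =>
      star (qwFourier ψ t k j) * qwFourier ψ t (k - ξ / t) j) volume (-Real.pi) Real.pi := by
    intro j
    apply Continuous.intervalIntegrable
    fun_prop
  rw [charFun_apply_real, qwMeasure, integral_sum_dirac (by simp)]
  simp only [dotProduct, Pi.star_apply, Fin.sum_univ_two]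
  rw [intervalIntegral.integral_add (hint 0) (hint 1)]
  simp_rw [hevol.qwFourier_eq_sum hinit t]
  rw [integral_conj_mul_translate, integral_conj_mul_translate, ← mul_add, ← mul_assoc,
    inv_mul_cancel₀ (by simp [Real.pi_ne_zero]), one_mul, ← Finset.sum_add_distrib,
    tsum_eq_sum (s := Finset.Icc (-(t : ℤ)) t)]
  · refine Finset.sum_congr rfl fun x _ => ?_
    rw [ENNReal.toReal_ofReal (by
      unfold qwProb
      exact add_nonneg (Complex.normSq_nonneg _) (Complex.normSq_nonneg _)), qwProb,
      Complex.real_smul, ← mul_add, mul_comm]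
    push_cast
    congr 2
    ring
  · intro x hx
    simp [qwProb, hevol.eq_zero_of_notMem_Icc hinit t hx]

end Fourier

lemma tendsto_atTop_of_two_mul {X : Type*} {f : ℕ → X} {l : Filter X}
    (he : Tendsto (fun n => f (2 * n)) atTop l) (ho : Tendsto (fun n => f (2 * n + 1)) atTop l) :
    Tendsto f atTop l := by
  intro s hs
  obtain ⟨N, hN⟩ := mem_atTop_sets.1 (he hs)
  obtain ⟨M, hM⟩ := mem_atTop_sets.1 (ho hs)
  refine mem_atTop_sets.2 ⟨2 * N + 2 * M, fun t ht => ?_⟩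
  rcases Nat.even_or_odd' t with ⟨n, rfl | rfl⟩
  · exact hN n (by omega)
  · exact hM n (by omega)

lemma tendsto_mul_sub_of_hasDerivAt {θ : ℝ → ℝ} {θ' k : ℝ} (hθ : HasDerivAt θ θ' k) (ξ : ℝ)
    {m : ℕ → ℕ} (hm : Tendsto m atTop atTop)
    (hnm : Tendsto (fun n : ℕ => (n : ℝ) / m n) atTop (nhds (1 / 2))) :
    Tendsto (fun n : ℕ => (n : ℝ) * (θ (k - ξ / m n) - θ k)) atTop (nhds (-(ξ * θ') / 2)) := by
  have hτ : HasDerivAt (fun s => θ (k - ξ * s)) (-(ξ * θ')) 0 := by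
    have h1 : HasDerivAt (fun s : ℝ => k - ξ * s) (-ξ) 0 := by
      simpa using ((hasDerivAt_id (0 : ℝ)).const_mul ξ).const_sub k
    have h2 : HasDerivAt θ θ' (k - ξ * 0) := by simpa using hθ
    exact (h2.comp 0 h1).congr_deriv (by ring)
  have hm' : Tendsto (fun n => (m n : ℝ)) atTop atTop := tendsto_natCast_atTop_atTop.comp hm
  have hs : Tendsto (fun n => ((m n : ℝ))⁻¹) atTop (nhdsWithin 0 {0}ᶜ) := by
    refine tendsto_nhdsWithin_iff.2 ⟨tendsto_inv_atTop_zero.comp hm', ?_⟩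
    filter_upwards [hm'.eventually_gt_atTop 0] with n hn
    simp [hn.ne']
  have key := hnm.mul ((hasDerivAt_iff_tendsto_slope_zero.1 hτ).comp hs)
  refine (key.congr' ?_).trans_eq ?_
  · filter_upwards [hm'.eventually_gt_atTop 0] with n hn
    simp only [Function.comp_apply, inv_inv, smul_eq_mul, zero_add, mul_zero, sub_zero,
      div_eq_mul_inv]
    field_simp
  · congr 1
    ring

lemma norm_exp_I_mul_mul_neg_one_pow (x : ℝ) (n : ℕ) :
    ‖Complex.exp (Complex.I * x) * (-1) ^ n‖ = 1 := by
  simp [mul_comm Complex.I, Complex.norm_exp_ofReal_mul_I]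

/-- Limit of the autocorrelation of a superposition of two orthogonal
modes with phases `θ` and `π - θ`. -/
lemma tendsto_star_dotProduct_of_phase {θ : ℝ → ℝ} {θ' k : ℝ} (hθ : HasDerivAt θ θ' k)
    {p q : ℝ → Fin 2 → ℂ} (hp : ContinuousAt p k) (hq : ContinuousAt q k)
    (hpq : star (p k) ⬝ᵥ q k = 0) {Φ : ℕ → ℝ → Fin 2 → ℂ}
    (hΦ : ∀ n k, Φ n k = Complex.exp (Complex.I * θ k) ^ n • p k +
      (-Complex.exp (-(Complex.I * θ k))) ^ n • q k) (ξ : ℝ)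
    {m : ℕ → ℕ} (hm : Tendsto m atTop atTop)
    (hnm : Tendsto (fun n : ℕ => (n : ℝ) / m n) atTop (nhds (1 / 2))) :
    Tendsto (fun n => star (Φ n k) ⬝ᵥ Φ n (k - ξ / m n)) atTop
      (nhds (Complex.exp (Complex.I * (-(ξ * θ') / 2 : ℝ)) * (star (p k) ⬝ᵥ p k) +
        Complex.exp (-(Complex.I * (-(ξ * θ') / 2 : ℝ))) * (star (q k) ⬝ᵥ q k))) := by
  have hm' : Tendsto (fun n => (m n : ℝ)) atTop atTop := tendsto_natCast_atTop_atTop.comp hm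
  have hk : Tendsto (fun n => k - ξ / m n) atTop (nhds k) := by
    simpa using tendsto_const_nhds.sub ((tendsto_const_nhds (x := ξ)).div_atTop hm')
  have hp' := hp.tendsto.comp hk
  have hq' := hq.tendsto.comp hk
  have hdot : ∀ v : Fin 2 → ℂ, Continuous fun w : Fin 2 → ℂ => star v ⬝ᵥ w := fun v => by
    fun_prop
  have hph := tendsto_mul_sub_of_hasDerivAt hθ ξ hm hnm
  have hphC := (Complex.continuous_ofReal.tendsto _).comp hph
  have e1 := (Complex.continuous_exp.tendsto _).comp (hphC.const_mul Complex.I)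
  have e2 := (Complex.continuous_exp.tendsto _).comp (hphC.const_mul Complex.I).neg
  have t1 := e1.mul (((hdot (p k)).tendsto _).comp hp')
  have t2 := e2.mul (((hdot (q k)).tendsto _).comp hq')
  have c1 : Tendsto (fun n => Complex.exp (Complex.I *
      ((-(n * (θ k + θ (k - ξ / m n))) : ℝ) : ℂ)) * (-1) ^ n *
      (star (p k) ⬝ᵥ q (k - ξ / m n))) atTop (nhds 0) := by
    refine squeeze_zero_norm (fun n => ?_)
      (tendsto_zero_iff_norm_tendsto_zero.1 (((hdot (p k)).tendsto _).comp hq' |>.trans_eq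
        (by rw [hpq])))
    rw [norm_mul, norm_exp_I_mul_mul_neg_one_pow, one_mul]
    rfl
  have hqp : star (q k) ⬝ᵥ p k = 0 := by
    rw [Matrix.star_dotProduct, hpq, star_zero]
  have c2 : Tendsto (fun n => Complex.exp (Complex.I *
      ((n * (θ k + θ (k - ξ / m n)) : ℝ) : ℂ)) * (-1) ^ n *
      (star (q k) ⬝ᵥ p (k - ξ / m n))) atTop (nhds 0) := by
    refine squeeze_zero_norm (fun n => ?_)
      (tendsto_zero_iff_norm_tendsto_zero.1 (((hdot (q k)).tendsto _).comp hp' |>.trans_eq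
        (by rw [hqp])))
    rw [norm_mul, norm_exp_I_mul_mul_neg_one_pow, one_mul]
    rfl
  have key := (t1.add t2).add (c1.add c2)
  rw [add_zero, add_zero] at key
  refine key.congr fun n => ?_
  have hconj : ∀ x : ℝ, star (Complex.exp (Complex.I * x)) = Complex.exp (-(Complex.I * x)) := by
    intro x
    simp [← Complex.exp_conj]
  have hconj' : ∀ x : ℝ, star (Complex.exp (-(Complex.I * x))) = Complex.exp (Complex.I * x) := by
    intro x
    simp [← Complex.exp_conj]
  have hsq : ((-1 : ℂ) ^ n) * (-1) ^ n = 1 := by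
    rw [← mul_pow]
    simp
  simp only [hΦ, star_add, star_smul, star_pow, star_neg, hconj, hconj', add_dotProduct,
    dotProduct_add, smul_dotProduct, dotProduct_smul, smul_eq_mul, Function.comp_apply]
  rw [neg_pow (Complex.exp (Complex.I * θ k)),
    neg_pow (Complex.exp (-(Complex.I * θ (k - ξ / m n))))]
  simp only [← Complex.exp_nat_mul]
  have x1 : Complex.exp (Complex.I * ((n * (θ (k - ξ / m n) - θ k) : ℝ) : ℂ)) =
      Complex.exp (n * -(Complex.I * θ k)) * Complex.exp (n * (Complex.I * θ (k - ξ / m n))) := by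
    rw [← Complex.exp_add]
    congr 1
    push_cast
    ring
  have x2 : Complex.exp (-(Complex.I * ((n * (θ (k - ξ / m n) - θ k) : ℝ) : ℂ))) =
      Complex.exp (n * (Complex.I * θ k)) * Complex.exp (n * -(Complex.I * θ (k - ξ / m n))) := by
    rw [← Complex.exp_add]
    congr 1
    push_cast
    ring
  have x3 : Complex.exp (Complex.I * ((-(n * (θ k + θ (k - ξ / m n))) : ℝ) : ℂ)) =
      Complex.exp (n * -(Complex.I * θ k)) * Complex.exp (n * -(Complex.I * θ (k - ξ / m n))) := by
    rw [← Complex.exp_add]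
    congr 1
    push_cast
    ring
  have x4 : Complex.exp (Complex.I * ((n * (θ k + θ (k - ξ / m n)) : ℝ) : ℂ)) =
      Complex.exp (n * (Complex.I * θ k)) * Complex.exp (n * (Complex.I * θ (k - ξ / m n))) := by
    rw [← Complex.exp_add]
    congr 1
    push_cast
    ring
  rw [x1, x2, x3, x4]
  linear_combination (-(Complex.exp (n * (Complex.I * θ k)) *
    Complex.exp (n * -(Complex.I * θ (k - ξ / m n))) *
    (star (q k) ⬝ᵥ q (k - ξ / m n)))) * hsq

/-- Entries of a real orthogonal `2 × 2` matrix in terms of its first row and determinant. -/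
lemma entries_of_transpose_mul_self {a b c d : ℝ}
    (h : Matrix.transpose (!![a, b; c, d] : Matrix (Fin 2) (Fin 2) ℝ) * !![a, b; c, d] = 1) :
    ∃ δ : ℝ, δ ^ 2 = 1 ∧ c = -(δ * b) ∧ d = δ * a ∧ a ^ 2 + b ^ 2 = 1 ∧
      (!![a, b; c, d] : Matrix (Fin 2) (Fin 2) ℝ).det = δ := by
  have h00 := congrFun (congrFun h 0) 0
  have h01 := congrFun (congrFun h 0) 1
  have h11 := congrFun (congrFun h 1) 1
  simp [Matrix.mul_apply, Fin.sum_univ_two] at h00 h01 h11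
  have hc : c = -((a * d - b * c) * b) := by linear_combination d * h01 - c * h11
  have hd : d = (a * d - b * c) * a := by linear_combination c * h01 - d * h00
  have hδ : (a * d - b * c) ^ 2 = 1 := by
    linear_combination (b * b + d * d) * h00 + h11 - (a * b + c * d) * h01
  refine ⟨a * d - b * c, hδ, hc, hd, ?_, by rw [Matrix.det_fin_two_of]⟩
  have : d ^ 2 = a ^ 2 := by
    calc d ^ 2 = ((a * d - b * c) * a) ^ 2 := by rw [← hd]
      _ = a ^ 2 := by rw [mul_pow, hδ, one_mul]
  linear_combination h11 - this

lemma star_mulVec_dotProduct_mulVec {M : Matrix (Fin 2) (Fin 2) ℂ} (hM : M.conjTranspose * M = 1)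
    (u v : Fin 2 → ℂ) : star (M.mulVec u) ⬝ᵥ M.mulVec v = star u ⬝ᵥ v := by
  rw [Matrix.star_mulVec, Matrix.dotProduct_mulVec, Matrix.vecMul_vecMul, hM, Matrix.vecMul_one]

lemma Rmat_conjTranspose_mul_self (k : ℝ) : (Rmat k).conjTranspose * Rmat k = 1 := by
  ext i j
  fin_cases i <;> fin_cases j <;>
    simp [Rmat, Matrix.mul_apply, Fin.sum_univ_two, ← Complex.exp_conj, ← Complex.exp_add]

lemma Rmat_mul_conjTranspose_mul_self {M : Matrix (Fin 2) (Fin 2) ℂ}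
    (hM : M.conjTranspose * M = 1) (k : ℝ) :
    (Rmat k * M).conjTranspose * (Rmat k * M) = 1 := by
  rw [Matrix.conjTranspose_mul, Matrix.mul_assoc, ← Matrix.mul_assoc _ (Rmat k) M,
    Rmat_conjTranspose_mul_self, Matrix.one_mul, hM]

lemma conjTranspose_mul_self_of_transpose_mul_self {a b c d : ℝ}
    (h : Matrix.transpose (!![a, b; c, d] : Matrix (Fin 2) (Fin 2) ℝ) * !![a, b; c, d] = 1) :
    (!![(a : ℂ), (b : ℂ); (c : ℂ), (d : ℂ)]).conjTranspose *
      !![(a : ℂ), (b : ℂ); (c : ℂ), (d : ℂ)] = 1 := by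
  ext i j
  have hij := congrArg Complex.ofReal (congrFun (congrFun h i) j)
  fin_cases i <;> fin_cases j <;>
    simpa [Matrix.mul_apply, Fin.sum_univ_two] using hij

/-- The component of `(α, β)` in the eigenspace of the matrix `!![m, z; conj z, -m]`
for its eigenvalue `C`. -/
def coinMode (m C : ℝ) (z α β : ℂ) : Fin 2 → ℂ :=
  ![(α + (m * α + z * β) / C) / 2, (β + (star z * α - m * β) / C) / 2]

section Modes

variable {m C S : ℝ} {z α β : ℂ}

lemma mulVec_coinMode (hC : C ≠ 0) (h : m ^ 2 + Complex.normSq z = C ^ 2) :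
    (!![Complex.I * S + m, z; star z, Complex.I * S - m]).mulVec (coinMode m C z α β) =
      (C + Complex.I * S : ℂ) • coinMode m C z α β := by
  have hz : (m : ℂ) ^ 2 + z * star z = C ^ 2 := by
    rw [Complex.star_def, Complex.mul_conj]
    exact_mod_cast h
  have hC' : (C : ℂ) ≠ 0 := Complex.ofReal_ne_zero.2 hC
  ext j
  fin_cases j
  · simp only [Fin.zero_eta, coinMode, Matrix.mulVec, dotProduct, Fin.sum_univ_two, Matrix.of_apply,
      Matrix.cons_val_zero, Matrix.cons_val_one, Pi.smul_apply, smul_eq_mul, Matrix.cons_val']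
    field_simp
    linear_combination α * hz
  · simp only [Fin.mk_one, coinMode, Matrix.mulVec, dotProduct, Fin.sum_univ_two, Matrix.of_apply,
      Matrix.cons_val_zero, Matrix.cons_val_one, Pi.smul_apply, smul_eq_mul, Matrix.cons_val']
    field_simp
    linear_combination β * hz

lemma coinMode_add_coinMode_neg (m C : ℝ) (z α β : ℂ) :
    coinMode m C z α β + coinMode m (-C) z α β = ![α, β] := by
  ext j
  fin_cases j <;> simp [coinMode] <;> ring

lemma star_coinMode_dotProduct_neg (hC : C ≠ 0) (h : m ^ 2 + Complex.normSq z = C ^ 2) :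
    star (coinMode m C z α β) ⬝ᵥ coinMode m (-C) z α β = 0 := by
  have hz : (m : ℂ) ^ 2 + z * star z = C ^ 2 := by
    rw [Complex.star_def, Complex.mul_conj]
    exact_mod_cast h
  have hC' : (C : ℂ) ≠ 0 := Complex.ofReal_ne_zero.2 hC
  simp [coinMode, dotProduct, Fin.sum_univ_two] at hz ⊢
  field_simp
  linear_combination (-(starRingEnd ℂ α * α) - starRingEnd ℂ β * β) * hz

lemma star_coinMode_dotProduct_self (hC : C ≠ 0) (h : m ^ 2 + Complex.normSq z = C ^ 2)
    (hαβ : Complex.normSq α + Complex.normSq β = 1) :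
    star (coinMode m C z α β) ⬝ᵥ coinMode m C z α β =
      (((1 + (m * (Complex.normSq α - Complex.normSq β) + 2 * (star α * β * z).re) / C) / 2 : ℝ) :
        ℂ) := by
  have hz : (m : ℂ) ^ 2 + z * star z = C ^ 2 := by
    rw [Complex.star_def, Complex.mul_conj]
    exact_mod_cast h
  have hC' : (C : ℂ) ≠ 0 := Complex.ofReal_ne_zero.2 hC
  have hαβ' : starRingEnd ℂ α * α + starRingEnd ℂ β * β = 1 := by
    rw [← Complex.normSq_eq_conj_mul_self, ← Complex.normSq_eq_conj_mul_self]
    exact_mod_cast hαβ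
  have hre : (2 * ((star α * β * z).re : ℂ)) =
      starRingEnd ℂ α * β * z + α * starRingEnd ℂ β * starRingEnd ℂ z := by
    have := Complex.add_conj (starRingEnd ℂ α * β * z)
    simp only [map_mul, Complex.conj_conj] at this
    rw [this]
    simp
  push_cast
  rw [hre, Complex.normSq_eq_conj_mul_self, Complex.normSq_eq_conj_mul_self]
  have h2 : starRingEnd ℂ (2 : ℂ) = 2 := map_ofNat _ 2
  simp [coinMode, dotProduct, Fin.sum_univ_two, h2] at hz ⊢
  field_simp
  linear_combination (starRingEnd ℂ α * α + starRingEnd ℂ β * β) * hz + 2 * C ^ 2 * hαβ'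

end Modes

lemma continuous_konnoVelocity {a : ℝ} (ha : a ^ 2 < 1) : Continuous (konnoVelocity a) :=
  continuous_iff_continuousAt.2 fun φ => (hasDerivAt_konnoVelocity ha φ).continuousAt

lemma konnoVelocity_add_pi (a φ : ℝ) : konnoVelocity a (φ + Real.pi) = -konnoVelocity a φ := by
  simp [konnoVelocity, neg_div]

lemma konnoVelocity_neg (a φ : ℝ) : konnoVelocity a (-φ) = konnoVelocity a φ := by
  simp [konnoVelocity]

lemma intervalIntegral_comp_two_mul_of_periodic {F : ℝ → ℂ} (hF : Continuous F)
    (hper : Function.Periodic F (2 * Real.pi)) :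
    ∫ k in (-Real.pi)..Real.pi, F (2 * k) = ∫ φ in (-Real.pi)..Real.pi, F φ := by
  rw [intervalIntegral.integral_comp_mul_left F two_ne_zero]
  have hi : ∀ a b, IntervalIntegrable F volume a b := fun a b => hF.intervalIntegrable a b
  rw [← intervalIntegral.integral_add_adjacent_intervals (hi _ 0) (hi 0 _)]
  have h1 := hper.intervalIntegral_add_eq (2 * -Real.pi) (-Real.pi)
  have h2 := hper.intervalIntegral_add_eq 0 (-Real.pi)
  rw [show 2 * -Real.pi + 2 * Real.pi = 0 by ring,
    show -Real.pi + 2 * Real.pi = Real.pi by ring] at h1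
  rw [show 0 + 2 * Real.pi = 2 * Real.pi by ring,
    show -Real.pi + 2 * Real.pi = Real.pi by ring] at h2
  rw [h1, h2, ← two_smul ℝ, smul_smul]
  simp

lemma intervalIntegral_eq_zero_of_odd {F : ℝ → ℂ} (hF : ∀ x, F (-x) = -F x) (b : ℝ) :
    ∫ x in (-b)..b, F x = 0 := by
  have h := intervalIntegral.integral_comp_neg (a := -b) (b := b) F
  simp_rw [hF, intervalIntegral.integral_neg, neg_neg] at h
  exact self_eq_neg.1 h.symm

lemma intervalIntegral_eq_two_mul_of_even {F : ℝ → ℂ} (hc : Continuous F)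
    (hF : ∀ x, F (-x) = F x) (b : ℝ) :
    ∫ x in (-b)..b, F x = 2 * ∫ x in (0 : ℝ)..b, F x := by
  have h := intervalIntegral.integral_comp_neg (a := 0) (b := b) F
  simp_rw [hF, neg_zero] at h
  rw [← intervalIntegral.integral_add_adjacent_intervals (hc.intervalIntegrable _ 0)
    (hc.intervalIntegrable 0 _), ← h]
  ring

/-- Averaging the two counter-propagating modes over the quasi-momentum leaves only the
contribution which is linear in the velocity. -/
lemma integral_modes {a : ℝ} (ha : a ^ 2 < 1) (ξ c e₀ e₁ : ℝ) :
    ∫ k in (-Real.pi)..Real.pi,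
      (Complex.exp (Complex.I * (ξ * konnoVelocity a (2 * k) : ℝ)) *
        ((1 + (-(c * konnoVelocity a (2 * k)) + (e₀ + e₁ * Real.sin (2 * k)) /
          Real.sqrt (1 - (a * Real.sin (2 * k)) ^ 2))) / 2 : ℝ) +
      Complex.exp (-(Complex.I * (ξ * konnoVelocity a (2 * k) : ℝ))) *
        ((1 - (-(c * konnoVelocity a (2 * k)) + (e₀ + e₁ * Real.sin (2 * k)) /
          Real.sqrt (1 - (a * Real.sin (2 * k)) ^ 2))) / 2 : ℝ)) =
      2 * ∫ φ in (0 : ℝ)..Real.pi, Complex.exp (Complex.I * (ξ * konnoVelocity a φ : ℝ)) *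
        (1 - c * konnoVelocity a φ : ℝ) := by
  have hv := continuous_konnoVelocity ha
  have hC : Continuous fun φ => Real.sqrt (1 - (a * Real.sin φ) ^ 2) := by fun_prop
  have hC0 : ∀ φ, Real.sqrt (1 - (a * Real.sin φ) ^ 2) ≠ 0 := fun φ =>
    (Real.sqrt_pos.2 (one_sub_mul_sin_sq_pos ha φ)).ne'
  set W : ℝ → ℝ := fun φ => -(c * konnoVelocity a φ) + (e₀ + e₁ * Real.sin φ) /
    Real.sqrt (1 - (a * Real.sin φ) ^ 2) with hW
  have hWc : Continuous W := by
    refine Continuous.add (by fun_prop) (Continuous.div (by fun_prop) hC hC0)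
  set P : ℝ → ℂ := fun φ => Complex.exp (Complex.I * (ξ * konnoVelocity a φ : ℝ)) *
    ((1 + W φ) / 2 : ℝ) with hP
  set Q : ℝ → ℂ := fun φ => Complex.exp (-(Complex.I * (ξ * konnoVelocity a φ : ℝ))) *
    ((1 - W φ) / 2 : ℝ) with hQ
  have hPc : Continuous P := by fun_prop
  have hQc : Continuous Q := by fun_prop
  have hv2 : ∀ φ, konnoVelocity a (φ + 2 * Real.pi) = konnoVelocity a φ := fun φ => by
    rw [two_mul, ← add_assoc, konnoVelocity_add_pi, konnoVelocity_add_pi, neg_neg]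
  have hPper : Function.Periodic P (2 * Real.pi) := fun φ => by
    simp only [hP, hW, hv2, Real.sin_add_two_pi]
  have hQper : Function.Periodic Q (2 * Real.pi) := fun φ => by
    simp only [hQ, hW, hv2, Real.sin_add_two_pi]
  have hshift : ∫ φ in (-Real.pi)..Real.pi, Q φ =
      ∫ φ in (-Real.pi)..Real.pi, Q (φ + Real.pi) := by
    rw [intervalIntegral.integral_comp_add_right]
    have := hQper.intervalIntegral_add_eq (-Real.pi) (-Real.pi + Real.pi)
    rw [show -Real.pi + 2 * Real.pi = Real.pi by ring,
      show -Real.pi + Real.pi + 2 * Real.pi = Real.pi + Real.pi by ring] at this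
    exact this
  have hsum : ∀ φ, P φ + Q (φ + Real.pi) =
      Complex.exp (Complex.I * (ξ * konnoVelocity a φ : ℝ)) * (1 - c * konnoVelocity a φ : ℝ) +
      Complex.exp (Complex.I * (ξ * konnoVelocity a φ : ℝ)) *
        (e₁ * Real.sin φ / Real.sqrt (1 - (a * Real.sin φ) ^ 2) : ℝ) := fun φ => by
    simp only [hP, hQ, hW, konnoVelocity_add_pi, Real.sin_add_pi, mul_neg, neg_sq,
      Complex.ofReal_neg, neg_neg]
    rw [← mul_add, ← mul_add, ← Complex.ofReal_add, ← Complex.ofReal_add]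
    congr 2
    field_simp [hC0 φ]
    ring
  have hA : Continuous fun φ => Complex.exp (Complex.I * (ξ * konnoVelocity a φ : ℝ)) *
      (1 - c * konnoVelocity a φ : ℝ) := by fun_prop
  have hB : Continuous fun φ => Complex.exp (Complex.I * (ξ * konnoVelocity a φ : ℝ)) *
      (e₁ * Real.sin φ / Real.sqrt (1 - (a * Real.sin φ) ^ 2) : ℝ) :=
    Continuous.mul (by fun_prop)
      (Complex.continuous_ofReal.comp (Continuous.div (by fun_prop) hC hC0))
  calc _ = ∫ k in (-Real.pi)..Real.pi, (fun φ => P φ + Q φ) (2 * k) := rfl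
    _ = ∫ φ in (-Real.pi)..Real.pi, (P φ + Q φ) :=
      intervalIntegral_comp_two_mul_of_periodic (hPc.add hQc) (hPper.add hQper)
    _ = ∫ φ in (-Real.pi)..Real.pi, (P φ + Q (φ + Real.pi)) := by
      rw [intervalIntegral.integral_add (hPc.intervalIntegrable _ _)
        (hQc.intervalIntegrable _ _), hshift, ← intervalIntegral.integral_add
        (hPc.intervalIntegrable _ _) (Continuous.intervalIntegrable (by fun_prop) _ _)]
    _ = _ := by
      simp_rw [hsum]
      rw [intervalIntegral.integral_add (hA.intervalIntegrable _ _) (hB.intervalIntegrable _ _),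
        intervalIntegral_eq_two_mul_of_even hA (fun φ => by simp [konnoVelocity_neg]),
        intervalIntegral_eq_zero_of_odd (F := fun φ =>
          Complex.exp (Complex.I * (ξ * konnoVelocity a φ : ℝ)) *
            (e₁ * Real.sin φ / Real.sqrt (1 - (a * Real.sin φ) ^ 2) : ℝ))
          (fun φ => by simp [konnoVelocity_neg, neg_div]), add_zero]

lemma measurable_konnoDensity (a : ℝ) : Measurable (konnoDensity a) := by
  unfold konnoDensity
  exact Measurable.ite (measurableSet_lt (by fun_prop) (by fun_prop)) (by fun_prop)
    measurable_const

lemma konnoDensity_nonneg {a : ℝ} (ha : a ^ 2 < 1) (x : ℝ) : 0 ≤ konnoDensity a x := by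
  unfold konnoDensity
  split_ifs with hx
  · have : 0 ≤ 1 - x ^ 2 := by
      have := sq_lt_sq.2 hx
      linarith
    have := Real.pi_pos
    positivity
  · exact le_rfl

lemma qwWeakLimit_of_tendsto_charFun {ψ : ℕ → ℤ → Fin 2 → ℂ} {f : ℝ → ℝ} (hf : Measurable f)
    (hf0 : ∀ x, 0 ≤ f x) (hf1 : ∫ x, f x = 1) (hψ : ∀ t, IsProbabilityMeasure (qwMeasure ψ t))
    (h : ∀ ξ : ℝ, Tendsto (fun t => charFun (qwMeasure ψ t) ξ) atTop
      (nhds (∫ x, (f x : ℂ) * Complex.exp (ξ * x * Complex.I)))) :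
    qwWeakLimit ψ f := by
  have hint : Integrable f := .of_integral_ne_zero (by rw [hf1]; exact one_ne_zero)
  set ν : Measure ℝ := volume.withDensity fun x => ENNReal.ofReal (f x) with hν
  have hνp : IsProbabilityMeasure ν := by
    refine ⟨?_⟩
    rw [hν, withDensity_apply _ MeasurableSet.univ, Measure.restrict_univ,
      ← ofReal_integral_eq_lintegral_ofReal hint (ae_of_all _ hf0), hf1, ENNReal.ofReal_one]
  have hνc : ∀ ξ, charFun ν ξ = ∫ x, (f x : ℂ) * Complex.exp (ξ * x * Complex.I) := by
    intro ξ
    rw [charFun_apply_real, hν, integral_withDensity_eq_integral_toReal_smul (by fun_prop)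
      (ae_of_all _ fun _ => ENNReal.ofReal_lt_top)]
    simp [ENNReal.toReal_ofReal, hf0]
  have key := ProbabilityMeasure.tendsto_of_tendsto_charFun
    (μ := fun t => ⟨qwMeasure ψ t, hψ t⟩) (μ₀ := ⟨ν, hνp⟩) (fun ξ => by
      simpa only [ProbabilityMeasure.coe_mk, hνc] using h ξ)
  intro g
  have hg := ProbabilityMeasure.tendsto_iff_forall_integral_tendsto.1 key g
  simp only [ProbabilityMeasure.coe_mk] at hg
  refine hg.trans_eq ?_
  rw [hν, integral_withDensity_eq_integral_toReal_smul (by fun_prop)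
      (ae_of_all _ fun _ => ENNReal.ofReal_lt_top)]
  simp [ENNReal.toReal_ofReal, hf0, mul_comm]

section Unitary

variable {U : ℕ → Matrix (Fin 2) (Fin 2) ℂ} {ψ : ℕ → ℤ → Fin 2 → ℂ} {α β : ℂ}

lemma QWEvolves.star_qwFourier_dotProduct_self (hinit : QWInit α β ψ) (hevol : QWEvolves U ψ)
    (hU : ∀ t, (U t).conjTranspose * U t = 1)
    (hαβ : Complex.normSq α + Complex.normSq β = 1) (t : ℕ) (k : ℝ) :
    star (qwFourier ψ t k) ⬝ᵥ qwFourier ψ t k = 1 := by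
  induction t with
  | zero =>
    rw [qwFourier_zero hinit]
    have : starRingEnd ℂ α * α + starRingEnd ℂ β * β = 1 := by
      rw [← Complex.normSq_eq_conj_mul_self, ← Complex.normSq_eq_conj_mul_self]
      exact_mod_cast hαβ
    simpa [dotProduct, Fin.sum_univ_two] using this
  | succ t ih =>
    rw [hevol.qwFourier_succ hinit,
      star_mulVec_dotProduct_mulVec (Rmat_mul_conjTranspose_mul_self (hU t) k), ih]

lemma norm_star_dotProduct_le {u v : Fin 2 → ℂ} (hu : star u ⬝ᵥ u = 1) (hv : star v ⬝ᵥ v = 1) :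
    ‖star u ⬝ᵥ v‖ ≤ 2 := by
  have aux : ∀ {w : Fin 2 → ℂ}, star w ⬝ᵥ w = 1 → ∀ j, ‖w j‖ ≤ 1 := by
    intro w hw j
    have h1 : Complex.normSq (w 0) + Complex.normSq (w 1) = 1 := by
      simp only [dotProduct, Pi.star_apply, Fin.sum_univ_two, Complex.star_def,
        ← Complex.normSq_eq_conj_mul_self] at hw
      exact_mod_cast hw
    rw [← sq_le_one_iff₀ (norm_nonneg _), ← Complex.normSq_eq_norm_sq]
    have h2 := Complex.normSq_nonneg (w 0)
    have h3 := Complex.normSq_nonneg (w 1)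
    fin_cases j
    · simp only [Fin.zero_eta]
      linarith
    · simp only [Fin.mk_one]
      linarith
  simp only [dotProduct, Pi.star_apply, Fin.sum_univ_two]
  refine (norm_add_le _ _).trans ?_
  simp only [norm_mul, norm_star]
  have h0 := mul_le_one₀ (aux hu 0) (norm_nonneg _) (aux hv 0)
  have h1 := mul_le_one₀ (aux hu 1) (norm_nonneg _) (aux hv 1)
  linarith

lemma QWEvolves.isProbabilityMeasure_qwMeasure (hinit : QWInit α β ψ) (hevol : QWEvolves U ψ)
    (hU : ∀ t, (U t).conjTranspose * U t = 1)
    (hαβ : Complex.normSq α + Complex.normSq β = 1) (t : ℕ) :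
    IsProbabilityMeasure (qwMeasure ψ t) := by
  have h := hevol.charFun_qwMeasure hinit t 0
  rw [charFun_zero] at h
  simp only [zero_div, sub_zero, hevol.star_qwFourier_dotProduct_self hinit hU hαβ,
    intervalIntegral.integral_const] at h
  have h1 : (qwMeasure ψ t).real Set.univ = 1 := by
    have hpi : (Real.pi : ℂ) ≠ 0 := by exact_mod_cast Real.pi_ne_zero
    have h2 : (((qwMeasure ψ t).real Set.univ : ℝ) : ℂ) = 1 := by
      rw [h]
      simp
      field_simp
      ring
    exact_mod_cast h2
  exact ⟨(ENNReal.toReal_eq_one_iff _).1 h1⟩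

lemma QWEvolves.tendsto_charFun_qwMeasure (hinit : QWInit α β ψ) (hevol : QWEvolves U ψ)
    (hU : ∀ t, (U t).conjTranspose * U t = 1)
    (hαβ : Complex.normSq α + Complex.normSq β = 1) (ξ : ℝ) {L : ℝ → ℂ}
    (hL : ∀ k, Tendsto (fun t : ℕ => star (qwFourier ψ t k) ⬝ᵥ qwFourier ψ t (k - ξ / t)) atTop
      (nhds (L k))) :
    Tendsto (fun t => charFun (qwMeasure ψ t) ξ) atTop
      (nhds ((2 * Real.pi : ℂ)⁻¹ * ∫ k in (-Real.pi)..Real.pi, L k)) := by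
  simp_rw [hevol.charFun_qwMeasure hinit]
  refine Tendsto.const_mul _ ?_
  refine intervalIntegral.tendsto_integral_filter_of_dominated_convergence (fun _ => 2) ?_ ?_
    intervalIntegrable_const (ae_of_all _ fun k _ => hL k)
  · refine Eventually.of_forall fun t => Continuous.aestronglyMeasurable ?_
    have := hevol.continuous_qwFourier hinit t
    fun_prop
  · exact Eventually.of_forall fun t => ae_of_all _ fun k _ => norm_star_dotProduct_le
      (hevol.star_qwFourier_dotProduct_self hinit hU hαβ t k)
      (hevol.star_qwFourier_dotProduct_self hinit hU hαβ t _)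

end Unitary

section TwoPeriod

variable {a₀ b₀ a₁ b₁ δ : ℝ}

/-- The off-diagonal entry of the two-step evolution matrix. -/
def twoStepOffDiag (a₀ b₀ a₁ b₁ δ k : ℝ) : ℂ :=
  ⟨a₁ * b₀ * Real.cos (2 * k) + δ * a₀ * b₁, a₁ * b₀ * Real.sin (2 * k)⟩

/-- Half the difference of the diagonal entries of the two-step evolution matrix. -/
def twoStepDiag (a₀ b₀ a₁ b₁ δ k : ℝ) : ℝ :=
  a₀ * a₁ * Real.cos (2 * k) - δ * b₀ * b₁

lemma twoStep_matrix (hδ : δ ^ 2 = 1) (k : ℝ) :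
    (Rmat k * !![(a₁ : ℂ), (b₁ : ℂ); ((δ * b₁ : ℝ) : ℂ), ((-(δ * a₁) : ℝ) : ℂ)]) *
      (Rmat k * !![(a₀ : ℂ), (b₀ : ℂ); ((-(δ * b₀) : ℝ) : ℂ), ((δ * a₀ : ℝ) : ℂ)]) =
    !![Complex.I * (a₀ * a₁ * Real.sin (2 * k) : ℝ) + twoStepDiag a₀ b₀ a₁ b₁ δ k,
        twoStepOffDiag a₀ b₀ a₁ b₁ δ k;
      star (twoStepOffDiag a₀ b₀ a₁ b₁ δ k),
        Complex.I * (a₀ * a₁ * Real.sin (2 * k) : ℝ) - twoStepDiag a₀ b₀ a₁ b₁ δ k] := by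
  have hz : twoStepOffDiag a₀ b₀ a₁ b₁ δ k =
      a₁ * b₀ * (Real.cos (2 * k) + Real.sin (2 * k) * Complex.I) + δ * a₀ * b₁ := by
    apply Complex.ext <;> simp [twoStepOffDiag, -Complex.ofReal_cos, -Complex.ofReal_sin]
  have hz' : star (twoStepOffDiag a₀ b₀ a₁ b₁ δ k) =
      a₁ * b₀ * (Real.cos (2 * k) - Real.sin (2 * k) * Complex.I) + δ * a₀ * b₁ := by
    rw [hz]
    simp [-Complex.ofReal_cos, -Complex.ofReal_sin, sub_eq_add_neg]
  have hδ' : (δ : ℂ) ^ 2 = 1 := by exact_mod_cast hδ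
  have h1 : Complex.exp (Complex.I * k) * Complex.exp (Complex.I * k) =
      Real.cos (2 * k) + Real.sin (2 * k) * Complex.I := by
    rw [← Complex.exp_add, Complex.ofReal_cos, Complex.ofReal_sin, ← Complex.exp_mul_I]
    congr 1
    push_cast
    ring
  have h2 : Complex.exp (-(Complex.I * k)) * Complex.exp (-(Complex.I * k)) =
      Real.cos (2 * k) - Real.sin (2 * k) * Complex.I := by
    have h := Complex.exp_mul_I (-((2 * k : ℝ) : ℂ))
    rw [Complex.cos_neg, Complex.sin_neg, neg_mul (Complex.sin _), ← sub_eq_add_neg] at h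
    rw [← Complex.exp_add, Complex.ofReal_cos, Complex.ofReal_sin, ← h]
    congr 1
    push_cast
    ring
  have h3 : Complex.exp (Complex.I * k) * Complex.exp (-(Complex.I * k)) = 1 := by
    rw [← Complex.exp_add, add_neg_cancel, Complex.exp_zero]
  rw [hz', hz, twoStepDiag, Rmat]
  generalize Complex.exp (Complex.I * k) = e at *
  generalize Complex.exp (-(Complex.I * k)) = e' at *
  generalize Real.cos (2 * k) = c at *
  generalize Real.sin (2 * k) = s at *
  ext i j
  fin_cases i <;> fin_cases j <;> simp [Matrix.mul_apply, Fin.sum_univ_two]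
  · linear_combination a₀ * a₁ * h1 - δ * b₀ * b₁ * h3
  · linear_combination a₁ * b₀ * h1 + δ * a₀ * b₁ * h3
  · linear_combination a₁ * b₀ * δ ^ 2 * h2 + δ * a₀ * b₁ * h3 +
      a₁ * b₀ * (c - s * Complex.I) * hδ'
  · linear_combination -a₀ * a₁ * δ ^ 2 * h2 + δ * b₀ * b₁ * h3 -
      a₀ * a₁ * (c - s * Complex.I) * hδ'

lemma twoStepDiag_sq_add_normSq (hδ : δ ^ 2 = 1) (h₀ : a₀ ^ 2 + b₀ ^ 2 = 1)
    (h₁ : a₁ ^ 2 + b₁ ^ 2 = 1) (k : ℝ) :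
    twoStepDiag a₀ b₀ a₁ b₁ δ k ^ 2 + Complex.normSq (twoStepOffDiag a₀ b₀ a₁ b₁ δ k) =
      1 - (a₀ * a₁ * Real.sin (2 * k)) ^ 2 := by
  have hcs := Real.sin_sq_add_cos_sq (2 * k)
  simp only [twoStepDiag, twoStepOffDiag, Complex.normSq_mk]
  linear_combination (b₁ ^ 2 * b₀ ^ 2 + a₀ ^ 2 * b₁ ^ 2) * hδ +
    (a₀ ^ 2 * a₁ ^ 2 + a₁ ^ 2 * b₀ ^ 2) * hcs + (a₁ ^ 2 + b₁ ^ 2) * h₀ + h₁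

lemma exp_I_mul_arcsin {x : ℝ} (hx : x ^ 2 < 1) :
    Complex.exp (Complex.I * Real.arcsin x) = Real.sqrt (1 - x ^ 2) + Complex.I * x := by
  have h := abs_lt.1 ((sq_lt_one_iff_abs_lt_one x).1 hx)
  rw [mul_comm, Complex.exp_mul_I, ← Complex.ofReal_cos, ← Complex.ofReal_sin, Real.cos_arcsin,
    Real.sin_arcsin h.1.le h.2.le, mul_comm Complex.I]

lemma neg_exp_neg_I_mul_arcsin {x : ℝ} (hx : x ^ 2 < 1) :
    -Complex.exp (-(Complex.I * Real.arcsin x)) =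
      ((-Real.sqrt (1 - x ^ 2) : ℝ) : ℂ) + Complex.I * x := by
  have h := exp_I_mul_arcsin (x := -x) (by simpa using hx)
  rw [Real.arcsin_neg, neg_sq] at h
  push_cast at h ⊢
  rw [← mul_neg, h]
  ring

lemma hasDerivAt_arcsin_mul_sin {a : ℝ} (ha : a ^ 2 < 1) (k : ℝ) :
    HasDerivAt (fun k => Real.arcsin (a * Real.sin (2 * k)))
      (-(2 * konnoVelocity a (2 * k))) k := by
  have hpos := one_sub_mul_sin_sq_pos ha (2 * k)
  have h := abs_lt.1 ((sq_lt_one_iff_abs_lt_one (a * Real.sin (2 * k))).1 (by linarith))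
  have h1 : HasDerivAt (fun k => a * Real.sin (2 * k)) (a * (Real.cos (2 * k) * 2)) k := by
    have h2 : HasDerivAt (fun k : ℝ => 2 * k) 2 k := by
      simpa using (hasDerivAt_id k).const_mul 2
    exact (h2.sin).const_mul a
  refine ((Real.hasDerivAt_arcsin h.1.ne' h.2.ne).comp k h1).congr_deriv ?_
  rw [konnoVelocity]
  ring

variable {α β : ℂ} {ψ : ℕ → ℤ → Fin 2 → ℂ}

/-- The autocorrelation of the Fourier transform of a two-period walk converges to a
superposition of two counter-propagating modes. -/
lemma tendsto_autocorrelation_twoPeriod {U : ℕ → Matrix (Fin 2) (Fin 2) ℂ}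
    (hinit : QWInit α β ψ) (hevol : QWEvolves U ψ) (hδ : δ ^ 2 = 1)
    (h₀ : a₀ ^ 2 + b₀ ^ 2 = 1) (h₁ : a₁ ^ 2 + b₁ ^ 2 = 1) (ha : (a₀ * a₁) ^ 2 < 1)
    (hU₀ : ∀ n, U (2 * n) =
      !![(a₀ : ℂ), (b₀ : ℂ); ((-(δ * b₀) : ℝ) : ℂ), ((δ * a₀ : ℝ) : ℂ)])
    (hU₁ : ∀ n, U (2 * n + 1) =
      !![(a₁ : ℂ), (b₁ : ℂ); ((δ * b₁ : ℝ) : ℂ), ((-(δ * a₁) : ℝ) : ℂ)])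
    (hU : ∀ t, (U t).conjTranspose * U t = 1)
    (hαβ : Complex.normSq α + Complex.normSq β = 1) (ξ k : ℝ) :
    Tendsto (fun t : ℕ => star (qwFourier ψ t k) ⬝ᵥ qwFourier ψ t (k - ξ / t)) atTop
      (nhds (Complex.exp (Complex.I * (ξ * konnoVelocity (a₀ * a₁) (2 * k) : ℝ)) *
        ((1 + (twoStepDiag a₀ b₀ a₁ b₁ δ k * (Complex.normSq α - Complex.normSq β) +
          2 * (star α * β * twoStepOffDiag a₀ b₀ a₁ b₁ δ k).re) /
          Real.sqrt (1 - (a₀ * a₁ * Real.sin (2 * k)) ^ 2)) / 2 : ℝ) +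
        Complex.exp (-(Complex.I * (ξ * konnoVelocity (a₀ * a₁) (2 * k) : ℝ))) *
        ((1 - (twoStepDiag a₀ b₀ a₁ b₁ δ k * (Complex.normSq α - Complex.normSq β) +
          2 * (star α * β * twoStepOffDiag a₀ b₀ a₁ b₁ δ k).re) /
          Real.sqrt (1 - (a₀ * a₁ * Real.sin (2 * k)) ^ 2)) / 2 : ℝ))) := by
  set C : ℝ → ℝ := fun k => Real.sqrt (1 - (a₀ * a₁ * Real.sin (2 * k)) ^ 2) with hCdef
  set m : ℝ → ℝ := twoStepDiag a₀ b₀ a₁ b₁ δ with hmdef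
  set z : ℝ → ℂ := twoStepOffDiag a₀ b₀ a₁ b₁ δ with hzdef
  set θ : ℝ → ℝ := fun k => Real.arcsin (a₀ * a₁ * Real.sin (2 * k)) with hθdef
  have hpos : ∀ k, 0 < 1 - (a₀ * a₁ * Real.sin (2 * k)) ^ 2 := fun k =>
    one_sub_mul_sin_sq_pos ha (2 * k)
  have hC0 : ∀ k, C k ≠ 0 := fun k => (Real.sqrt_pos.2 (hpos k)).ne'
  have hmz : ∀ k, m k ^ 2 + Complex.normSq (z k) = C k ^ 2 := fun k => by
    rw [hmdef, hzdef, twoStepDiag_sq_add_normSq hδ h₀ h₁, hCdef, Real.sq_sqrt (hpos k).le]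
  have hmz' : ∀ k, m k ^ 2 + Complex.normSq (z k) = (-C k) ^ 2 := fun k => by
    rw [neg_sq, hmz]
  have hCc : Continuous C := by fun_prop
  have hmc : Continuous m := by
    unfold m twoStepDiag
    fun_prop
  have hzc : Continuous z := by
    have : z = fun k => ((a₁ * b₀ * Real.cos (2 * k) + δ * a₀ * b₁ : ℝ) : ℂ) +
        ((a₁ * b₀ * Real.sin (2 * k) : ℝ) : ℂ) * Complex.I := by
      funext k
      exact Complex.mk_eq_add_mul_I _ _
    rw [this]
    fun_prop
  set p : ℝ → Fin 2 → ℂ := fun k => coinMode (m k) (C k) (z k) α β with hpdef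
  set q : ℝ → Fin 2 → ℂ := fun k => coinMode (m k) (-C k) (z k) α β with hqdef
  have hCC : ∀ k, (C k : ℂ) ≠ 0 := fun k => Complex.ofReal_ne_zero.2 (hC0 k)
  have hCC' : ∀ k, ((-C k : ℝ) : ℂ) ≠ 0 := fun k => by simpa using hC0 k
  have hpc : Continuous p := by
    refine continuous_pi fun j => ?_
    fin_cases j
    · exact (Continuous.add continuous_const
        (Continuous.div (by fun_prop) (by fun_prop) hCC)).div_const 2
    · exact (Continuous.add continuous_const
        (Continuous.div (by fun_prop) (by fun_prop) hCC)).div_const 2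
  have hqc : Continuous q := by
    refine continuous_pi fun j => ?_
    fin_cases j
    · exact (Continuous.add continuous_const
        (Continuous.div (by fun_prop) (by fun_prop) hCC')).div_const 2
    · exact (Continuous.add continuous_const
        (Continuous.div (by fun_prop) (by fun_prop) hCC')).div_const 2
  have hpq : ∀ k, star (p k) ⬝ᵥ q k = 0 := fun k => star_coinMode_dotProduct_neg (hC0 k) (hmz k)
  have heven : ∀ n k, qwFourier ψ (2 * n) k = Complex.exp (Complex.I * θ k) ^ n • p k +
      (-Complex.exp (-(Complex.I * θ k))) ^ n • q k := by
    intro n k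
    have hS : (a₀ * a₁ * Real.sin (2 * k)) ^ 2 < 1 := by linarith [hpos k]
    induction n with
    | zero =>
      rw [mul_zero, qwFourier_zero hinit, pow_zero, pow_zero, one_smul, one_smul]
      exact (coinMode_add_coinMode_neg _ _ _ _ _).symm
    | succ n ih =>
      rw [show 2 * (n + 1) = 2 * n + 1 + 1 by ring, hevol.qwFourier_succ hinit,
        hevol.qwFourier_succ hinit, Matrix.mulVec_mulVec, hU₀, hU₁, twoStep_matrix hδ, ih,
        Matrix.mulVec_add, Matrix.mulVec_smul, Matrix.mulVec_smul,
        mulVec_coinMode (hC0 k) (hmz k), mulVec_coinMode (neg_ne_zero.2 (hC0 k)) (hmz' k),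
        smul_smul, smul_smul, pow_succ, pow_succ, neg_exp_neg_I_mul_arcsin hS,
        exp_I_mul_arcsin hS]
  set M : ℝ → Matrix (Fin 2) (Fin 2) ℂ := fun k => Rmat k *
    !![(a₀ : ℂ), (b₀ : ℂ); ((-(δ * b₀) : ℝ) : ℂ), ((δ * a₀ : ℝ) : ℂ)] with hM
  have hMc : Continuous M := by
    have : Continuous Rmat := by
      refine continuous_matrix fun i j => ?_
      fin_cases i <;> fin_cases j <;> simp [Rmat] <;> fun_prop
    exact this.matrix_mul continuous_const
  have hMU : ∀ k, (M k).conjTranspose * M k = 1 := fun k =>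
    Rmat_mul_conjTranspose_mul_self (by rw [← hU₀ 0]; exact hU _) k
  have hodd : ∀ n k, qwFourier ψ (2 * n + 1) k =
      Complex.exp (Complex.I * θ k) ^ n • (M k).mulVec (p k) +
      (-Complex.exp (-(Complex.I * θ k))) ^ n • (M k).mulVec (q k) := by
    intro n k
    rw [hevol.qwFourier_succ hinit, hU₀, heven, Matrix.mulVec_add, Matrix.mulVec_smul,
      Matrix.mulVec_smul]
  have hθ := hasDerivAt_arcsin_mul_sin ha k
  have hinv : Tendsto (fun n : ℕ => (n : ℝ)⁻¹) atTop (nhds 0) :=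
    tendsto_inv_atTop_zero.comp tendsto_natCast_atTop_atTop
  have hratio₀ : Tendsto (fun n : ℕ => (n : ℝ) / (2 * n : ℕ)) atTop (nhds (1 / 2)) := by
    refine tendsto_const_nhds.congr' ?_
    filter_upwards [eventually_gt_atTop 0] with n hn
    push_cast
    field_simp
  have hratio₁ : Tendsto (fun n : ℕ => (n : ℝ) / (2 * n + 1 : ℕ)) atTop (nhds (1 / 2)) := by
    have h : Tendsto (fun n : ℕ => 1 / (2 + (n : ℝ)⁻¹)) atTop (nhds (1 / (2 + 0))) :=
      Tendsto.div tendsto_const_nhds (hinv.const_add 2) (by norm_num)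
    rw [add_zero] at h
    refine h.congr' ?_
    filter_upwards [eventually_gt_atTop 0] with n hn
    push_cast
    field_simp
  have hlim₀ := tendsto_star_dotProduct_of_phase hθ hpc.continuousAt hqc.continuousAt (hpq k)
    heven ξ (tendsto_atTop_mono (fun n => show n ≤ 2 * n by omega) tendsto_id) hratio₀
  have hlim₁ := tendsto_star_dotProduct_of_phase hθ (hMc.matrix_mulVec hpc).continuousAt
    (hMc.matrix_mulVec hqc).continuousAt
    ((star_mulVec_dotProduct_mulVec (hMU k) _ _).trans (hpq k)) hodd ξ
    (tendsto_atTop_mono (fun n => show n ≤ 2 * n + 1 by omega) tendsto_id) hratio₁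
  rw [star_mulVec_dotProduct_mulVec (hMU k), star_mulVec_dotProduct_mulVec (hMU k)] at hlim₁
  refine (tendsto_atTop_of_two_mul hlim₀ hlim₁).trans_eq ?_
  rw [hpdef, hqdef]
  rw [star_coinMode_dotProduct_self (hC0 k) (hmz k) hαβ,
    star_coinMode_dotProduct_self (neg_ne_zero.2 (hC0 k)) (hmz' k) hαβ, div_neg, ← sub_eq_add_neg,
    show -(ξ * -(2 * konnoVelocity (a₀ * a₁) (2 * k))) / 2 =
      ξ * konnoVelocity (a₀ * a₁) (2 * k) by ring]

/-- The slope of the limit density is small enough for the density to be nonnegative. -/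
lemma slope_mul_le_one (h0 : a₀ ≠ 0) (h₀ : a₀ ^ 2 + b₀ ^ 2 = 1) (h₁ : a₁ ^ 2 + b₁ ^ 2 = 1)
    (hαβ : Complex.normSq α + Complex.normSq β = 1) {x : ℝ} (hx : |x| < |a₀ * a₁|) :
    (Complex.normSq α - Complex.normSq β + 2 * (star α * β).re * b₀ / a₀) * x ≤ 1 := by
  set M := Complex.normSq α - Complex.normSq β with hM
  set r := (star α * β).re with hr
  have hMr : M ^ 2 + (2 * r) ^ 2 ≤ 1 := by
    have hrr : r ^ 2 ≤ Complex.normSq α * Complex.normSq β := by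
      have : Complex.normSq (star α * β) = Complex.normSq α * Complex.normSq β := by
        simp
      rw [← this, Complex.normSq_apply]
      nlinarith [sq_nonneg (star α * β).im]
    nlinarith
  have hc : (M * a₀ + 2 * r * b₀) ^ 2 ≤ 1 := by
    nlinarith [sq_nonneg (M * b₀ - 2 * r * a₀)]
  have hx2 : x ^ 2 ≤ a₀ ^ 2 := by
    have := (sq_lt_sq.2 hx).le
    nlinarith [sq_nonneg b₁, sq_nonneg a₀, mul_nonneg (sq_nonneg a₀) (sq_nonneg b₁)]
  have hsq : ((M + 2 * r * b₀ / a₀) * x) ^ 2 ≤ 1 := by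
    have ha0 : 0 < a₀ ^ 2 := by positivity
    have e : ((M + 2 * r * b₀ / a₀) * x) ^ 2 = (M * a₀ + 2 * r * b₀) ^ 2 * (x ^ 2 / a₀ ^ 2) := by
      field_simp
    rw [e]
    exact mul_le_one₀ hc (by positivity) ((div_le_one ha0).2 hx2)
  exact (abs_le.1 ((sq_le_one_iff_abs_le_one _).1 hsq)).2

end TwoPeriod

/-- Two-period QW with orthogonal coins, case `det(H₁H₀) < 0`:
`X_t/t ⇒ Z` with density `f_K(x; a₀a₁)·[1 − (|α|²−|β|² + (αβ̄+ᾱβ)b₀/a₀)x]`. -/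
theorem two_period_QW_weak_limit_det_neg
    (a₀ b₀ c₀ d₀ a₁ b₁ c₁ d₁ : ℝ)
    (hne : a₀ ≠ 0 ∧ b₀ ≠ 0 ∧ c₀ ≠ 0 ∧ d₀ ≠ 0 ∧ a₁ ≠ 0 ∧ b₁ ≠ 0 ∧ c₁ ≠ 0 ∧ d₁ ≠ 0)
    (horth₀ : Matrix.transpose (!![a₀, b₀; c₀, d₀] : Matrix (Fin 2) (Fin 2) ℝ) * !![a₀, b₀; c₀, d₀] = 1)
    (horth₁ : Matrix.transpose (!![a₁, b₁; c₁, d₁] : Matrix (Fin 2) (Fin 2) ℝ) * !![a₁, b₁; c₁, d₁] = 1)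
    (hdet : ((!![a₁, b₁; c₁, d₁] : Matrix (Fin 2) (Fin 2) ℝ) * !![a₀, b₀; c₀, d₀]).det < 0)
    (α β : ℂ) (hαβ : Complex.normSq α + Complex.normSq β = 1)
    (ψ : ℕ → ℤ → Fin 2 → ℂ)
    (hinit : QWInit α β ψ)
    (hevol : QWEvolves
      (fun t => if Even t then !![(a₀ : ℂ), (b₀ : ℂ); (c₀ : ℂ), (d₀ : ℂ)]
                else !![(a₁ : ℂ), (b₁ : ℂ); (c₁ : ℂ), (d₁ : ℂ)]) ψ) :
    qwWeakLimit ψ (fun x =>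
      konnoDensity (a₀ * a₁) x *
        (1 - (Complex.normSq α - Complex.normSq β +
          ((α * (starRingEnd ℂ) β + (starRingEnd ℂ) α * β) * (b₀ : ℂ) / (a₀ : ℂ)).re) * x)) := by
  obtain ⟨ha₀, hb₀, -, -, ha₁, -, -, -⟩ := hne
  have hU : ∀ t, ((fun t : ℕ => if Even t then !![(a₀ : ℂ), (b₀ : ℂ); (c₀ : ℂ), (d₀ : ℂ)]
      else !![(a₁ : ℂ), (b₁ : ℂ); (c₁ : ℂ), (d₁ : ℂ)]) t).conjTranspose *
      (fun t : ℕ => if Even t then !![(a₀ : ℂ), (b₀ : ℂ); (c₀ : ℂ), (d₀ : ℂ)]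
      else !![(a₁ : ℂ), (b₁ : ℂ); (c₁ : ℂ), (d₁ : ℂ)]) t = 1 := by
    intro t
    dsimp only
    split_ifs
    · exact conjTranspose_mul_self_of_transpose_mul_self horth₀
    · exact conjTranspose_mul_self_of_transpose_mul_self horth₁
  obtain ⟨δ, hδ, hc₀, hd₀, h₀, hdet₀⟩ := entries_of_transpose_mul_self horth₀
  obtain ⟨δ₁, hδ₁, hc₁, hd₁, h₁, hdet₁⟩ := entries_of_transpose_mul_self horth₁
  rw [Matrix.det_mul, hdet₀, hdet₁] at hdet
  have hδδ : δ₁ = -δ := by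
    rcases sq_eq_sq_iff_eq_or_eq_neg.1 (hδ₁.trans hδ.symm) with h | h
    · rw [h] at hdet
      nlinarith
    · exact h
  have hc₁' : c₁ = δ * b₁ := by rw [hc₁, hδδ]; ring
  have hd₁' : d₁ = -(δ * a₁) := by rw [hd₁, hδδ]; ring
  have ha : (a₀ * a₁) ^ 2 < 1 := by
    have hb : 0 < b₀ ^ 2 := by positivity
    nlinarith [sq_nonneg b₁, mul_nonneg (sq_nonneg a₀) (sq_nonneg b₁)]
  have hslope : ((α * (starRingEnd ℂ) β + (starRingEnd ℂ) α * β) * (b₀ : ℂ) / (a₀ : ℂ)).re =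
      2 * (star α * β).re * b₀ / a₀ := by
    have h : α * (starRingEnd ℂ) β + (starRingEnd ℂ) α * β = ((2 * (star α * β).re : ℝ) : ℂ) := by
      apply Complex.ext <;> simp <;> ring
    rw [h, ← Complex.ofReal_mul, ← Complex.ofReal_div, Complex.ofReal_re]
  rw [hslope]
  set c : ℝ := Complex.normSq α - Complex.normSq β + 2 * (star α * β).re * b₀ / a₀ with hc
  have hprob := hevol.isProbabilityMeasure_qwMeasure hinit hU hαβ
  have hchar : ∀ ξ : ℝ, Tendsto (fun t => charFun (qwMeasure ψ t) ξ) atTop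
      (nhds (∫ x, ((konnoDensity (a₀ * a₁) x * (1 - c * x) : ℝ) : ℂ) *
        Complex.exp (ξ * x * Complex.I))) := by
    intro ξ
    have hlim := hevol.tendsto_charFun_qwMeasure hinit hU hαβ ξ
      (tendsto_autocorrelation_twoPeriod hinit hevol hδ h₀ h₁ ha
        (fun n => by simp [hc₀, hd₀]) (fun n => by simp [hc₁', hd₁']) hU hαβ ξ)
    convert hlim using 2
    have hmode : ∀ k : ℝ,
        (twoStepDiag a₀ b₀ a₁ b₁ δ k * (Complex.normSq α - Complex.normSq β) +
          2 * (star α * β * twoStepOffDiag a₀ b₀ a₁ b₁ δ k).re) /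
          Real.sqrt (1 - (a₀ * a₁ * Real.sin (2 * k)) ^ 2) =
        -(c * konnoVelocity (a₀ * a₁) (2 * k)) +
          ((-(δ * b₀ * b₁ * (Complex.normSq α - Complex.normSq β)) +
            2 * (star α * β).re * (δ * a₀ * b₁)) +
            -(2 * (star α * β).im * (a₁ * b₀)) * Real.sin (2 * k)) /
          Real.sqrt (1 - (a₀ * a₁ * Real.sin (2 * k)) ^ 2) := by
      intro k
      have hca : c * a₀ =
          (Complex.normSq α - Complex.normSq β) * a₀ + 2 * (star α * β).re * b₀ := by
        rw [hc]
        field_simp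
      rw [konnoVelocity, ← mul_div_assoc, ← neg_div, ← add_div, Complex.mul_re (star α * β)]
      congr 1
      simp only [twoStepDiag, twoStepOffDiag]
      linear_combination -(a₁ * Real.cos (2 * k)) * hca
    simp_rw [hmode]
    rw [integral_modes ha]
    have hdens := integral_konnoDensity_mul ha (mul_ne_zero ha₀ ha₁)
      fun x => Complex.exp (Complex.I * (ξ * x : ℝ)) * (1 - c * x : ℝ)
    rw [mul_inv, mul_assoc, mul_left_comm _ (2 : ℂ), inv_mul_cancel_left₀ two_ne_zero, ← hdens]
    congr 1
    funext x
    rw [mul_comm Complex.I]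
    push_cast
    ring
  refine qwWeakLimit_of_tendsto_charFun ((measurable_konnoDensity _).mul (by fun_prop)) ?_ ?_
    hprob hchar
  · intro x
    by_cases hx : |x| < |a₀ * a₁|
    · exact mul_nonneg (konnoDensity_nonneg ha x)
        (sub_nonneg.2 (slope_mul_le_one ha₀ h₀ h₁ hαβ hx))
    · rw [konnoDensity, if_neg hx, zero_mul]
  · have h := hchar 0
    simp only [charFun_zero, probReal_univ, Complex.ofReal_zero, zero_mul, Complex.exp_zero,
      mul_one, Complex.ofReal_one] at h
    exact_mod_cast (tendsto_nhds_unique tendsto_const_nhds h).symm
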